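/- arXiv:1604.08098 — 5 statements merged into one kernel-verified Lean document; each statement's English description precedes it below -/
import Mathlib

section
/- Let K ≥ 2, let p : Fin K → ℝ satisfy p_k ≥ 0 for all k and Σ_{k=1}^K p_k = 1, let q = max(1/2, max_{1≤k≤K} p_k), and assume q < 1. Let γ ≥ 1 be a real number and define acceptance probabilities a : Fin K → ℝ as follows: if γ ≥ 2q, set a_k = 2(1−q)/γ when p_k = q and a_k = 2q/γ otherwise; if 1 ≤ γ < 2q, set a_k = (1−q)/(γ−q) when p_k = q and a_k = 1 otherwise. Then S_w = Σ_{k=1}^K a_k p_k > 0, the matrix γ·S(a) − S_full is positive semidefinite, and Σ_{k=1}^K a_k p_k ≤ 1/γ. -/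
open Finset

/-- The index embedding from the first `K - 1` classes into all `K` classes. -/
def classEmb (K : ℕ) : Fin (K - 1) → Fin K := Fin.castLE (Nat.sub_le K 1)

/-- The subsampling information matrix `S(a)` with weights `w k = a k * p k`:
entries `δ_{ij} w_i - w_i w_j / S_w`. -/
noncomputable def subMat (K : ℕ) (w : Fin K → ℝ) : Matrix (Fin (K - 1)) (Fin (K - 1)) ℝ :=
  Matrix.of fun i j =>
    (if i = j then w (classEmb K i) else 0) -
      w (classEmb K i) * w (classEmb K j) / ∑ k, w k

/-- The full-data information matrix `S_full` with entries `δ_{ij} p_i - p_i p_j`. -/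
def fullMat (K : ℕ) (p : Fin K → ℝ) : Matrix (Fin (K - 1)) (Fin (K - 1)) ℝ :=
  Matrix.of fun i j =>
    (if i = j then p (classEmb K i) else 0) - p (classEmb K i) * p (classEmb K j)

lemma fullMat_eq (K : ℕ) (p : Fin K → ℝ) (hp1 : ∑ k, p k = 1) : fullMat K p = subMat K p := by
  ext i j
  simp [fullMat, subMat, hp1]

lemma subMat_herm (K : ℕ) (w : Fin K → ℝ) : (subMat K w).IsHermitian := by
  ext i j
  simp only [subMat, Matrix.conjTranspose_apply, Matrix.of_apply, star_trivial]
  by_cases h : i = j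
  · subst h; rfl
  · rw [if_neg h, if_neg (Ne.symm h)]; ring

lemma subMat_qf (n : ℕ) (w : Fin (n + 1) → ℝ) (x : Fin n → ℝ) :
    ∑ i, x i * ∑ j, (subMat (n + 1) w : Matrix (Fin n) (Fin n) ℝ) i j * x j =
      ∑ k, w k * (Fin.snoc x 0 : Fin (n + 1) → ℝ) k ^ 2
        - (∑ k, w k * (Fin.snoc x 0 : Fin (n + 1) → ℝ) k) ^ 2 / ∑ k, w k := by
  rw [Fin.sum_univ_castSucc (f := fun k => w k * (Fin.snoc x 0 : Fin (n + 1) → ℝ) k ^ 2),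
    Fin.sum_univ_castSucc (f := fun k => w k * (Fin.snoc x 0 : Fin (n + 1) → ℝ) k)]
  simp only [Fin.snoc_castSucc, Fin.snoc_last]
  generalize hS : ∑ k, w k = S
  have h : ∀ i j : Fin n, (subMat (n + 1) w : Matrix (Fin n) (Fin n) ℝ) i j =
      (if i = j then w i.castSucc else 0) - w i.castSucc * w j.castSucc / S := by
    intro i j
    rw [← hS]; rfl
  simp only [h, sub_mul, Finset.sum_sub_distrib, ite_mul, zero_mul, Finset.sum_ite_eq,
    Finset.mem_univ, if_true, mul_sub]
  congr 1
  · simp only [mul_zero, ne_eq, OfNat.ofNat_ne_zero, not_false_eq_true, zero_pow, add_zero]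
    exact Finset.sum_congr rfl fun i _ => by ring
  · rw [mul_zero, add_zero, sq, Finset.sum_mul_sum, Finset.sum_div]
    refine Finset.sum_congr rfl fun i _ => ?_
    rw [Finset.mul_sum, Finset.sum_div]
    exact Finset.sum_congr rfl fun j _ => by ring

lemma psd_of_qf (n : ℕ) (γ : ℝ) (w p : Fin (n + 1) → ℝ) (hp1 : ∑ k, p k = 1)
    (h : ∀ b : Fin (n + 1) → ℝ, ∑ k, p k * b k ^ 2 - (∑ k, p k * b k) ^ 2 ≤
      γ * (∑ k, w k * b k ^ 2 - (∑ k, w k * b k) ^ 2 / ∑ k, w k)) :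
    (γ • subMat (n + 1) w - fullMat (n + 1) p).PosSemidef := by
  rw [fullMat_eq _ _ hp1]
  refine Matrix.PosSemidef.of_dotProduct_mulVec_nonneg ?_ ?_
  · refine Matrix.IsHermitian.sub ?_ (subMat_herm _ _)
    have := subMat_herm (n + 1) w
    unfold Matrix.IsHermitian at *
    rw [Matrix.conjTranspose_smul, this]; simp
  · intro x
    have h1 := h (Fin.snoc (α := fun _ => ℝ) x 0)
    have e1 := subMat_qf n w x
    have e2 := subMat_qf n p x
    rw [hp1, div_one] at e2
    rw [← e1, ← e2] at h1
    rw [Matrix.sub_mulVec, Matrix.smul_mulVec, dotProduct_sub, dotProduct_smul, sub_nonneg]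
    exact h1

/-- Cauchy-Schwarz over the classes other than `k0`. -/
lemma cs_erase (n : ℕ) (p b : Fin (n + 1) → ℝ) (hp0 : ∀ k, 0 ≤ p k) (s : Finset (Fin (n + 1))) :
    (∑ k ∈ s, p k * b k) ^ 2 ≤ (∑ k ∈ s, p k) * ∑ k ∈ s, p k * b k ^ 2 := by
  refine Finset.sum_sq_le_sum_mul_sum_of_sq_le_mul s (fun k _ => hp0 k)
    (fun k _ => mul_nonneg (hp0 k) (sq_nonneg _)) (fun k _ => le_of_eq (by ring))

theorem lus_sampling_strategy
    (K : ℕ) (hK : 2 ≤ K) (p : Fin K → ℝ)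
    (hp0 : ∀ k, 0 ≤ p k) (hp1 : ∑ k, p k = 1)
    (q : ℝ) (hq : q = max (1 / 2) (⨆ k, p k)) (hq1 : q < 1)
    (γ : ℝ) (hγ : 1 ≤ γ) (a : Fin K → ℝ)
    (ha₁ : 2 * q ≤ γ → ∀ k, a k = if p k = q then 2 * (1 - q) / γ else 2 * q / γ)
    (ha₂ : γ < 2 * q → ∀ k, a k = if p k = q then (1 - q) / (γ - q) else 1) :
    0 < ∑ k, a k * p k ∧
    (γ • subMat K (fun k => a k * p k) - fullMat K p).PosSemidef ∧
    ∑ k, a k * p k ≤ 1 / γ := by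
  obtain ⟨n, rfl⟩ : ∃ n, K = n + 1 := ⟨K - 1, by omega⟩
  have hγ0 : 0 < γ := by linarith
  have hbdd : BddAbove (Set.range p) := (Set.finite_range p).bddAbove
  have hle : ∀ k, p k ≤ q := fun k => by
    rw [hq]; exact le_trans (le_ciSup hbdd k) (le_max_right _ _)
  have hhalf : 1 / 2 ≤ q := by rw [hq]; exact le_max_left _ _
  rcases eq_or_lt_of_le hhalf with h2 | h2
  · -- all acceptance probabilities are `1 / γ`
    have haa : ∀ k, a k = 1 / γ := by
      intro k
      rw [ha₁ (by rw [← h2]; linarith) k, ← h2]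
      split_ifs <;> norm_num
    have hs : ∀ f : Fin (n + 1) → ℝ, ∑ k, a k * p k * f k = (1 / γ) * ∑ k, p k * f k := by
      intro f
      rw [Finset.mul_sum]
      exact Finset.sum_congr rfl fun k _ => by rw [haa k]; ring
    have hS : ∑ k, a k * p k = 1 / γ := by
      have := hs (fun _ => 1)
      simpa [hp1] using this
    refine ⟨by rw [hS]; positivity, ?_, hS.le⟩
    refine psd_of_qf n γ _ p hp1 fun b => ?_
    rw [hS, hs (fun k => b k ^ 2), hs b]
    apply le_of_eq
    field_simp
  · obtain ⟨k0, hk0⟩ : ∃ k0, p k0 = q := by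
      obtain ⟨k0, h⟩ := exists_eq_ciSup_of_finite (f := p)
      refine ⟨k0, ?_⟩
      rw [h]
      rcases max_choice (1 / 2 : ℝ) (⨆ k, p k) with h' | h'
      · rw [h'] at hq; linarith
      · rw [hq, h']
    have hsplit : ∀ f : Fin (n + 1) → ℝ, ∑ k, f k = f k0 + ∑ k ∈ univ.erase k0, f k :=
      fun f => (Finset.add_sum_erase _ f (Finset.mem_univ k0)).symm
    have hrest : ∑ k ∈ univ.erase k0, p k = 1 - q := by
      have := hsplit p
      rw [hp1, hk0] at this; linarith
    have hne : ∀ k ∈ univ.erase k0, p k ≠ q := by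
      intro k hk he
      have := Finset.single_le_sum (f := p) (fun i _ => hp0 i) hk
      rw [hrest, he] at this; linarith
    obtain ⟨t, s, hat, has, hts⟩ : ∃ t s : ℝ, a k0 = t ∧ (∀ k ∈ univ.erase k0, a k = s) ∧
        ((2 * q ≤ γ ∧ t = 2 * (1 - q) / γ ∧ s = 2 * q / γ) ∨
          (γ < 2 * q ∧ t = (1 - q) / (γ - q) ∧ s = 1)) := by
      rcases le_or_gt (2 * q) γ with h | h
      · refine ⟨_, _, by rw [ha₁ h, if_pos hk0], fun k hk => by rw [ha₁ h, if_neg (hne k hk)],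
          Or.inl ⟨h, rfl, rfl⟩⟩
      · refine ⟨_, _, by rw [ha₂ h, if_pos hk0], fun k hk => by rw [ha₂ h, if_neg (hne k hk)],
          Or.inr ⟨h, rfl, rfl⟩⟩
    have hs : ∀ f : Fin (n + 1) → ℝ, ∑ k, a k * p k * f k =
        t * q * f k0 + s * ∑ k ∈ univ.erase k0, p k * f k := by
      intro f
      rw [hsplit, hat, hk0, Finset.mul_sum]
      congr 1
      exact Finset.sum_congr rfl fun k hk => by rw [has k hk]; ring
    have hS : ∑ k, a k * p k = t * q + s * (1 - q) := by
      have := hs (fun _ => 1)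
      simpa [hrest] using this
    have hq' : 0 < 1 - q := by linarith
    have hq0 : 0 < q := by linarith
    have hgq : 0 < γ - q := by linarith
    have key : ∀ x A B : ℝ, B ^ 2 ≤ (1 - q) * A → q * x ^ 2 + A - (q * x + B) ^ 2 ≤
        γ * (t * q * x ^ 2 + s * A - (t * q * x + s * B) ^ 2 / (t * q + s * (1 - q))) := by
      intro x A B hAB
      have hD : 0 ≤ A - B ^ 2 / (1 - q) := by
        rw [sub_nonneg, div_le_iff₀ hq']; linarith
      rw [← sub_nonneg]
      rcases hts with ⟨h, rfl, rfl⟩ | ⟨h, rfl, rfl⟩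
      · have e : (2 * (1 - q) / γ * q + 2 * q / γ * (1 - q)) = 4 * q * (1 - q) / γ := by ring
        have := mul_nonneg (by linarith : 0 ≤ 2 * q - 1) hD
        rw [e]
        refine this.trans (le_of_eq ?_)
        field_simp
        ring
      · have e : ((1 - q) / (γ - q) * q + 1 * (1 - q)) = (1 - q) * γ / (γ - q) := by
          field_simp; ring
        have := mul_nonneg (by linarith : 0 ≤ γ - 1) hD
        rw [e]
        refine this.trans (le_of_eq ?_)
        field_simp
        ring
    refine ⟨?_, ?_, ?_⟩
    · rw [hS]
      rcases hts with ⟨h, rfl, rfl⟩ | ⟨h, rfl, rfl⟩ <;> positivity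
    · refine psd_of_qf n γ _ p hp1 fun b => ?_
      rw [hS, hs (fun k => b k ^ 2), hs b, hsplit (fun k => p k * b k ^ 2),
        hsplit (fun k => p k * b k), hk0]
      refine key _ _ _ ?_
      rw [← hrest]
      exact cs_erase n p b hp0 _
    · rw [hS]
      rcases hts with ⟨h, rfl, rfl⟩ | ⟨h, rfl, rfl⟩
      · have e : (2 * (1 - q) / γ * q + 2 * q / γ * (1 - q)) = 4 * q * (1 - q) / γ := by ring
        rw [e]
        gcongr
        nlinarith [sq_nonneg (2 * q - 1)]
      · have e : ((1 - q) / (γ - q) * q + 1 * (1 - q)) = (1 - q) * γ / (γ - q) := by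
          field_simp; ring
        rw [e, div_le_div_iff₀ hgq hγ0]
        have h3 : 0 ≤ q - (1 - q) * γ := by nlinarith
        nlinarith [mul_nonneg (by linarith : 0 ≤ γ - 1) h3]
end

section
/- Let K ≥ 2, let p : Fin K → ℝ satisfy p_k ≥ 0 for all k and Σ_{k=1}^K p_k = 1, let q = max(1/2, max_{1≤k≤K} p_k), and assume q < 1. Let γ be a real number with 1 ≤ γ < 2q, and define a : Fin K → ℝ by a_k = (1−q)/(γ−q) if p_k = q and a_k = 1 otherwise. Then S_w = Σ_{k=1}^K a_k p_k > 0 and the (K−1)×(K−1) matrix γ·S(a) − S_full is positive semidefinite. -/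
open Finset

lemma quad_aux {n : ℕ} (w β : Fin n → ℝ) (c : ℝ) :
    ∑ i, ∑ j, β i * (((if i = j then w i else 0) - c * (w i * w j)) * β j)
      = ∑ i, w i * β i ^ 2 - c * (∑ i, w i * β i) ^ 2 := by
  have h1 : ∀ i j, β i * (((if i = j then w i else 0) - c * (w i * w j)) * β j)
      = (if i = j then w i * β i * β j else 0) - c * ((w i * β i) * (w j * β j)) := by
    intro i j
    split_ifs <;> ring
  simp only [h1, Finset.sum_sub_distrib, Finset.sum_ite_eq, Finset.mem_univ, if_true]
  rw [sq (∑ i, w i * β i), Finset.sum_mul_sum, Finset.mul_sum]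
  simp only [Finset.mul_sum]
  congr 1
  exact Finset.sum_congr rfl fun i _ => by ring

lemma alg_aux (γ q t A B : ℝ) (hq1 : q < 1) (hγ1 : 1 ≤ γ) (h : B ^ 2 ≤ (1 - q) * A) :
    0 ≤ γ * (((1 - q) / (γ - q) * q * t ^ 2 + A)
        - (((1 - q) / (γ - q) * q + (1 - q)))⁻¹ * ((1 - q) / (γ - q) * q * t + B) ^ 2)
      - ((q * t ^ 2 + A) - (q * t + B) ^ 2) := by
  have h1 : 0 < 1 - q := by linarith
  have h2 : 0 < γ - q := by linarith
  have h3 : 0 < γ := by linarith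
  have hS : (1 - q) / (γ - q) * q + (1 - q) = (1 - q) * γ / (γ - q) := by
    field_simp
    ring
  rw [hS]
  have key : γ * (((1 - q) / (γ - q) * q * t ^ 2 + A)
        - ((1 - q) * γ / (γ - q))⁻¹ * ((1 - q) / (γ - q) * q * t + B) ^ 2)
      - ((q * t ^ 2 + A) - (q * t + B) ^ 2) = (γ - 1) * (((1 - q) * A - B ^ 2) / (1 - q)) := by
    field_simp
    ring
  rw [key]
  exact mul_nonneg (by linarith) (div_nonneg (by linarith) h1.le)

theorem lus_psd_small_gamma
    (K : ℕ) (hK : 2 ≤ K) (p : Fin K → ℝ)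
    (hp0 : ∀ k, 0 ≤ p k) (hp1 : ∑ k, p k = 1)
    (q : ℝ) (hq : q = max (1 / 2) (⨆ k, p k)) (hq1 : q < 1)
    (γ : ℝ) (hγ1 : 1 ≤ γ) (hγ2 : γ < 2 * q) (a : Fin K → ℝ)
    (ha : ∀ k, a k = if p k = q then (1 - q) / (γ - q) else 1) :
    0 < ∑ k, a k * p k ∧
    (γ • subMat K (fun k => a k * p k) - fullMat K p).PosSemidef := by
  obtain ⟨n, rfl⟩ : ∃ n, K = n + 1 := ⟨K - 1, by omega⟩
  have hq2 : 1 / 2 < q := by linarith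
  have hsup : q = ⨆ k, p k := by
    rcases max_choice (1 / 2) (⨆ k, p k) with h | h
    · rw [h] at hq; linarith
    · rw [h] at hq; exact hq
  obtain ⟨m, hm⟩ : ∃ m, p m = q := by
    obtain ⟨m, hm⟩ := exists_eq_ciSup_of_finite (f := p)
    exact ⟨m, by rw [hm, hsup]⟩
  have hR : ∑ k ∈ univ.erase m, p k = 1 - q := by
    have := Finset.add_sum_erase univ p (mem_univ m)
    linarith
  have hne : ∀ k ∈ univ.erase m, a k = 1 := by
    intro k hk
    rw [ha, if_neg]
    intro h
    have := Finset.single_le_sum (f := p) (fun i _ => hp0 i) hk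
    linarith
  have ham : a m = (1 - q) / (γ - q) := by rw [ha, if_pos hm]
  have hsum : ∀ f : Fin (n + 1) → ℝ, ∑ k, a k * p k * f k
      = (1 - q) / (γ - q) * q * f m + ∑ k ∈ univ.erase m, p k * f k := by
    intro f
    rw [← Finset.add_sum_erase univ _ (mem_univ m), ham, hm]
    congr 1
    exact Finset.sum_congr rfl fun k hk => by rw [hne k hk, one_mul]
  have hsump : ∀ f : Fin (n + 1) → ℝ, ∑ k, p k * f k
      = q * f m + ∑ k ∈ univ.erase m, p k * f k := by
    intro f
    rw [← Finset.add_sum_erase univ _ (mem_univ m), hm]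
  have hS : ∑ k, a k * p k = (1 - q) / (γ - q) * q + (1 - q) := by
    have := hsum (fun _ => 1)
    simpa [hR] using this
  have h1 : 0 < 1 - q := by linarith
  have h2 : 0 < γ - q := by linarith
  refine ⟨by rw [hS]; positivity, ?_⟩
  refine Matrix.PosSemidef.of_dotProduct_mulVec_nonneg ?_ ?_
  · ext i j
    simp only [subMat, fullMat, Matrix.conjTranspose_apply, Matrix.sub_apply, Matrix.smul_apply,
      Matrix.of_apply, star_trivial, smul_eq_mul]
    by_cases h : i = j
    · subst h; rfl
    · rw [if_neg h, if_neg h, if_neg (Ne.symm h), if_neg (Ne.symm h)]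
      ring
  · intro β
    change Fin n → ℝ at β
    let x : Fin (n + 1) → ℝ := Fin.snoc (α := fun _ => ℝ) β 0
    have hx : ∀ i : Fin n, x i.castSucc = β i := fun i => by simp [x]
    have hxl : x (Fin.last n) = 0 := by simp [x]
    have hE : ∀ w : Fin (n + 1) → ℝ, ∑ i : Fin n, w i.castSucc * β i = ∑ k, w k * x k := by
      intro w
      rw [Fin.sum_univ_castSucc]
      simp [hx, hxl]
    have hE2 : ∀ w : Fin (n + 1) → ℝ,
        ∑ i : Fin n, w i.castSucc * β i ^ 2 = ∑ k, w k * x k ^ 2 := by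
      intro w
      rw [Fin.sum_univ_castSucc]
      simp [hx, hxl]
    have hCS : (∑ k ∈ univ.erase m, p k * x k) ^ 2
        ≤ (1 - q) * ∑ k ∈ univ.erase m, p k * x k ^ 2 := by
      rw [← hR]
      refine Finset.sum_sq_le_sum_mul_sum_of_sq_eq_mul _ (fun i _ => hp0 i)
        (fun i _ => mul_nonneg (hp0 i) (sq_nonneg _)) (fun i _ => by ring)
    have halg := alg_aux γ q (x m) _ _ hq1 hγ1 hCS
    have e1 := quad_aux (fun i : Fin n => a i.castSucc * p i.castSucc) β (∑ k, a k * p k)⁻¹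
    have e2 := quad_aux (fun i : Fin n => p i.castSucc) β 1
    rw [hE (fun k => a k * p k), hE2 (fun k => a k * p k), hsum x, hsum (fun k => x k ^ 2)] at e1
    rw [hE p, hE2 p, hsump x, hsump (fun k => x k ^ 2), one_mul] at e2
    rw [← hS, ← e1, ← e2] at halg
    refine halg.trans_eq ?_
    simp only [dotProduct, Matrix.mulVec, Finset.mul_sum, ← Finset.sum_sub_distrib]
    refine Finset.sum_congr rfl fun i _ => Finset.sum_congr rfl fun j _ => ?_
    simp only [subMat, fullMat, Matrix.sub_apply, Matrix.smul_apply, Matrix.of_apply,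
      smul_eq_mul, Pi.star_apply, star_trivial]
    change _ = β i * ((γ * ((if i = j then a i.castSucc * p i.castSucc else 0)
      - a i.castSucc * p i.castSucc * (a j.castSucc * p j.castSucc) / ∑ k, a k * p k)
      - ((if i = j then p i.castSucc else 0) - p i.castSucc * p j.castSucc)) * β j)
    ring
end

section
/- Let K ≥ 2, let p : Fin K → ℝ satisfy p_k ≥ 0 for all k and Σ_{k=1}^K p_k = 1, and let q = max(1/2, max_{1≤k≤K} p_k). Let γ be a real number with γ ≥ 2q, and define a : Fin K → ℝ by a_k = 2(1−q)/γ if p_k = q and a_k = 2q/γ otherwise. Then the expected acceptance probability satisfies Σ_{k=1}^K a_k p_k = 4q(1−q)/γ, and in particular Σ_{k=1}^K a_k p_k ≤ 1/γ. -/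
open Finset

theorem lus_expected_sample_size_large_gamma
    (K : ℕ) (hK : 2 ≤ K) (p : Fin K → ℝ)
    (hp0 : ∀ k, 0 ≤ p k) (hp1 : ∑ k, p k = 1)
    (q : ℝ) (hq : q = max (1 / 2) (⨆ k, p k))
    (γ : ℝ) (hγ : 2 * q ≤ γ) (a : Fin K → ℝ)
    (ha : ∀ k, a k = if p k = q then 2 * (1 - q) / γ else 2 * q / γ) :
    ∑ k, a k * p k = 4 * q * (1 - q) / γ ∧ ∑ k, a k * p k ≤ 1 / γ := by
  have hq2 : 1 / 2 ≤ q := hq ▸ le_max_left _ _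
  have hγ0 : 0 < γ := by linarith
  have key : ∑ k, a k * p k = 4 * q * (1 - q) / γ := by
    rcases hq2.eq_or_lt with h | h
    · have h1 : ∀ k, a k = 1 / γ := by
        intro k
        rw [ha k, ← h]
        split_ifs <;> norm_num
      simp only [h1]
      rw [← Finset.mul_sum, hp1, ← h]
      norm_num
    · haveI : Nonempty (Fin K) := ⟨⟨0, by omega⟩⟩
      obtain ⟨k0, hk0⟩ := exists_eq_ciSup_of_finite (f := p)
      have hk : p k0 = q := by
        rw [hk0]
        rcases max_choice (1 / 2 : ℝ) (⨆ k, p k) with h' | h'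
        · rw [h'] at hq
          linarith
        · rw [h'] at hq
          exact hq.symm
      have hs := Finset.add_sum_erase univ p (mem_univ k0)
      rw [hp1, hk] at hs
      have h2 : ∀ k ∈ univ.erase k0, a k * p k = 2 * q / γ * p k := by
        intro k hkm
        have h3 := Finset.single_le_sum (f := p) (fun i _ => hp0 i) hkm
        rw [ha k, if_neg]
        intro h4
        linarith
      rw [← Finset.add_sum_erase univ (fun k => a k * p k) (mem_univ k0),
        Finset.sum_congr rfl h2, ← Finset.mul_sum, ha k0, if_pos hk, hk,
        show ∑ k ∈ univ.erase k0, p k = 1 - q by linarith]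
      ring
  refine ⟨key, ?_⟩
  rw [key]
  gcongr
  nlinarith [sq_nonneg (2 * q - 1)]
end

section
/- Let K ≥ 2, let p : Fin K → ℝ satisfy p_k ≥ 0 for all k and Σ_{k=1}^K p_k = 1, let q = max(1/2, max_{1≤k≤K} p_k), and assume q < 1. Let γ be a real number with 1 ≤ γ < 2q, and define a : Fin K → ℝ by a_k = (1−q)/(γ−q) if p_k = q and a_k = 1 otherwise. Then the expected acceptance probability satisfies Σ_{k=1}^K a_k p_k = γ(1−q)/(γ−q), and moreover γ(1−q)/(γ−q) ≤ 1/γ, so Σ_{k=1}^K a_k p_k ≤ 1/γ. -/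
open Finset

theorem lus_expected_sample_size_small_gamma
    (K : ℕ) (hK : 2 ≤ K) (p : Fin K → ℝ)
    (hp0 : ∀ k, 0 ≤ p k) (hp1 : ∑ k, p k = 1)
    (q : ℝ) (hq : q = max (1 / 2) (⨆ k, p k)) (hq1 : q < 1)
    (γ : ℝ) (hγ1 : 1 ≤ γ) (hγ2 : γ < 2 * q) (a : Fin K → ℝ)
    (ha : ∀ k, a k = if p k = q then (1 - q) / (γ - q) else 1) :
    ∑ k, a k * p k = γ * (1 - q) / (γ - q) ∧
    γ * (1 - q) / (γ - q) ≤ 1 / γ ∧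
    ∑ k, a k * p k ≤ 1 / γ := by
  have hqh : 1 / 2 < q := by linarith
  have hd : 0 < γ - q := by linarith
  have : Nonempty (Fin K) := ⟨⟨0, by omega⟩⟩
  obtain ⟨j, hj⟩ := exists_eq_ciSup_of_finite (f := p)
  have hjq : p j = q := by
    rcases max_choice (1 / 2 : ℝ) (⨆ k, p k) with h | h
    · rw [h] at hq; linarith
    · rw [hj, hq, h]
  have hsplit := Finset.add_sum_erase univ p (mem_univ j)
  have huniq : ∀ k ∈ univ.erase j, a k * p k = p k := by
    intro k hk
    have hle := Finset.single_le_sum (f := p) (fun i _ => hp0 i) hk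
    rw [ha, if_neg, one_mul]
    intro h
    linarith
  have hsum : ∑ k, a k * p k = γ * (1 - q) / (γ - q) := by
    rw [← Finset.add_sum_erase univ (fun k => a k * p k) (mem_univ j),
      Finset.sum_congr rfl huniq]
    have e : ∑ k ∈ univ.erase j, p k = 1 - q := by linarith
    rw [e, ha, if_pos hjq, hjq]
    field_simp
    ring
  have hle : γ * (1 - q) / (γ - q) ≤ 1 / γ := by
    rw [div_le_div_iff₀ hd (by linarith)]
    have h1 : (1 - q) * γ ≤ q := by nlinarith
    nlinarith [mul_nonneg (sub_nonneg.2 hγ1) (sub_nonneg.2 h1)]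
  exact ⟨hsum, hle, hsum ▸ hle⟩
end

section
/- For every m ≥ 1, the log-sum-exp function G : (Fin m → ℝ) → ℝ defined by G(f) = log(1 + Σ_{k=1}^m exp(f_k)) is strictly convex on all of ℝ^m (i.e., StrictConvexOn ℝ univ G). -/
open Finset

theorem logSumExp_strictConvexOn (m : ℕ) (hm : 1 ≤ m) :
    StrictConvexOn ℝ (Set.univ : Set (Fin m → ℝ))
      (fun f : Fin m → ℝ => Real.log (1 + ∑ k, Real.exp (f k))) := by
  have pos : ∀ f : Fin m → ℝ, 0 < 1 + ∑ k, Real.exp (f k) := fun f => by positivity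
  refine ⟨convex_univ, ?_⟩
  intro x _ y _ hxy a b ha hb hab
  simp only [smul_eq_mul, Pi.add_apply, Pi.smul_apply]
  have norm1 : ∀ f : Fin m → ℝ, ∀ A, A = Real.log (1 + ∑ k, Real.exp (f k)) →
      Real.exp (-A) + ∑ k, Real.exp (f k - A) = 1 := by
    intro f A hA
    have h : Real.exp A = 1 + ∑ k, Real.exp (f k) := by rw [hA, Real.exp_log (pos f)]
    simp only [Real.exp_sub, ← Finset.sum_div, Real.exp_neg]
    have := Real.exp_pos A
    field_simp
    linarith
  generalize hA : Real.log (1 + ∑ k, Real.exp (x k)) = A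
  generalize hB : Real.log (1 + ∑ k, Real.exp (y k)) = B
  have h1 := norm1 x A hA.symm
  have h2 := norm1 y B hB.symm
  have cle : ∀ u v : ℝ, Real.exp (a * u + b * v) ≤ a * Real.exp u + b * Real.exp v :=
    fun u v => convexOn_exp.2 (Set.mem_univ u) (Set.mem_univ v) ha.le hb.le hab
  have clt : ∀ u v : ℝ, u ≠ v → Real.exp (a * u + b * v) < a * Real.exp u + b * Real.exp v :=
    fun u v h => strictConvexOn_exp.2 (Set.mem_univ u) (Set.mem_univ v) h ha hb hab
  rw [Real.log_lt_iff_lt_exp (by positivity)]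
  have key : Real.exp (a * (-A) + b * (-B)) +
      ∑ k, Real.exp (a * (x k - A) + b * (y k - B)) < 1 := by
    have e : (1 : ℝ) = (a * Real.exp (-A) + b * Real.exp (-B)) +
        ∑ k, (a * Real.exp (x k - A) + b * Real.exp (y k - B)) := by
      rw [Finset.sum_add_distrib, ← Finset.mul_sum, ← Finset.mul_sum]
      linear_combination (-1 : ℝ) * hab - a * h1 - b * h2
    rw [e]
    by_cases hAB : A = B
    · obtain ⟨k, hk⟩ := Function.ne_iff.1 hxy
      refine add_lt_add_of_le_of_lt (cle _ _) (Finset.sum_lt_sum (fun i _ => cle _ _)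
        ⟨k, Finset.mem_univ k, clt _ _ ?_⟩)
      intro h
      exact hk (by linarith)
    · exact add_lt_add_of_lt_of_le (clt _ _ (fun h => hAB (by linarith)))
        (Finset.sum_le_sum (fun i _ => cle _ _))
  have e2 : Real.exp (a * (-A) + b * (-B)) +
      ∑ k, Real.exp (a * (x k - A) + b * (y k - B)) =
      (1 + ∑ k, Real.exp (a * x k + b * y k)) / Real.exp (a * A + b * B) := by
    rw [add_div, Finset.sum_div, one_div, ← Real.exp_neg]
    congr 1
    · congr 1; ring
    · refine Finset.sum_congr rfl (fun k _ => ?_)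
      rw [← Real.exp_sub]
      congr 1; ring
  rw [e2, div_lt_one (Real.exp_pos _)] at key
  exact key
end
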